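/- Let n = 3. There exists a finite constant C > 0 such that ‖T(f₁,f₂,f₃)‖_{5/4} ≤ C ‖f₁‖_{5/3} ‖f₂‖_{5/3} ‖f₃‖_1 for all nonnegative measurable functions f₁, f₂, f₃ on ℝ; that is, T is of strong type at the point N^{*3} = (3/5, 3/5, 1; 4/5), a dual point of N = (3/5, 3/5, 1/5; 0). -/

import Mathlib

open MeasureTheory ENNReal

/-- The `L^p` "norm" (with respect to Lebesgue measure on `ℝ`) of an
`ℝ≥0∞`-valued function, with the convention for `p = ∞`. -/
noncomputable def lpNorm (p : ℝ≥0∞) (g : ℝ → ℝ≥0∞) : ℝ≥0∞ :=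
  if p = ∞ then essSup g (volume : Measure ℝ)
  else (∫⁻ x, g x ^ p.toReal) ^ (1 / p.toReal)

/-- The normalized (total mass 1) surface measure on the unit sphere
`S^{n-1} ⊂ ℝ^n`, viewed as a measure on `ℝ^n` supported on the sphere. -/
noncomputable def normSphere (n : ℕ) : Measure (EuclideanSpace ℝ (Fin n)) :=
  (Measure.map Subtype.val
      ((volume : Measure (EuclideanSpace ℝ (Fin n))).toSphere) Set.univ)⁻¹ •
    Measure.map Subtype.val ((volume : Measure (EuclideanSpace ℝ (Fin n))).toSphere)

/-- The multilinear spherical average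
`T(f₁,…,fₙ)(x) = ∫_{S^{n-1}} ∏_{j=1}^n f_j(x - σ_j) dσ(σ)`. -/
noncomputable def sphAvg (n : ℕ) (f : Fin n → ℝ → ℝ) (x : ℝ) : ℝ≥0∞ :=
  ∫⁻ σ, ∏ j, ENNReal.ofReal (f j (x - σ j)) ∂(normSphere n)

/-!
By duality and the translation `x = u + σ₂`, the theorem reduces to the trilinear estimate
`∫ g(σ₂) f₀(σ₂ - σ₀) f₁(σ₂ - σ₁) dσ ≤ C ‖g‖₅ ‖f₀‖_{5/3} ‖f₁‖_{5/3}` on the sphere of `ℝ³`, whose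
three linear forms are linearly independent. For independent `b` and `c`, the Jacobian of
`σ ↦ (⟪b, σ⟫, ⟪c, σ⟫)` is a multiple of `|⟪n, σ⟫|` with `n ⟂ b, c`, which gives an `L¹ × L¹`
estimate with this weight. The three weights `|⟪n, σ⟫|` belonging to the three pairs of forms have
no common zero on the sphere, so it is enough to bound the form with one of them inserted to a
positive power. For the pair without `g` Hölder's inequality suffices. For a pair containing `g`,
the pair estimates alone have the wrong exponents, and one interpolates them with bounds for a
single function against weights `X`, `Y` such that `|z| X² Y = 1`, where `|z|` is the weight of the
pair without `g`. On the slices `⟪b, σ⟫ = t` these weights are invariant under rescaling, so nothing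
is lost where the slices shrink to the poles.
-/

open Real Set

theorem lintegral_volumeIoiPow (n : ℕ) {f : ℝ → ℝ≥0∞} (hf : Measurable f) :
    ∫⁻ r, f r ∂Measure.volumeIoiPow n = ∫⁻ r in Ioi (0 : ℝ), ENNReal.ofReal (r ^ n) * f r := by
  rw [Measure.volumeIoiPow, lintegral_withDensity_eq_lintegral_mul _ (by fun_prop) (by fun_prop),
    ← lintegral_subtype_comap measurableSet_Ioi]
  rfl

section Polar

variable {E : Type*} [NormedAddCommGroup E] [NormedSpace ℝ E]

/-- The extension of a function `f` on the unit sphere to the unit ball which is constant along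
rays up to the weight `‖x‖ ^ (-n)`; for `n + 1 = dim E` this weight cancels the Jacobian of polar
coordinates, so that the extension and `f` have the same integral. -/
noncomputable def rayExtension (n : ℕ) (f : E → ℝ≥0∞) : E → ℝ≥0∞ :=
  (Metric.ball 0 1).indicator fun x ↦ (ENNReal.ofReal (‖x‖ ^ n))⁻¹ * f (‖x‖⁻¹ • x)

theorem lintegral_rayExtension_smul (n : ℕ) (f : E → ℝ≥0∞) {x : E} (hx : ‖x‖ = 1) :
    ∫⁻ r in Ioi (0 : ℝ), ENNReal.ofReal (r ^ n) * rayExtension n f (r • x) = f x := by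
  have hray {r : ℝ} (hr : r ∈ Ioi 0) :
      ENNReal.ofReal (r ^ n) * rayExtension n f (r • x) = (Iio 1).indicator (fun _ ↦ f x) r := by
    have hr' : 0 < r := hr
    have hnorm : ‖r • x‖ = r := by rw [norm_smul, hx, mul_one, norm_of_nonneg hr'.le]
    by_cases h : r < 1
    · rw [rayExtension, indicator_of_mem (by simpa [hnorm]), indicator_of_mem (mem_Iio.2 h), hnorm,
        smul_smul, inv_mul_cancel₀ hr'.ne', one_smul, ← mul_assoc,
        ENNReal.mul_inv_cancel (by simpa using pow_pos hr' n) ENNReal.ofReal_ne_top, one_mul]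
    · rw [rayExtension, indicator_of_notMem (by simpa [hnorm] using h), mul_zero,
        indicator_of_notMem (notMem_Iio.2 (not_lt.1 h))]
  rw [setLIntegral_congr_fun measurableSet_Ioi fun r hr ↦ hray hr,
    setLIntegral_indicator measurableSet_Iio, setLIntegral_const, inter_comm, Ioi_inter_Iio]
  simp

variable [MeasurableSpace E] [BorelSpace E]

theorem measurable_rayExtension (n : ℕ) {f : E → ℝ≥0∞} (hf : Measurable f) :
    Measurable (rayExtension n f) :=
  Measurable.indicator (by fun_prop) measurableSet_ball

theorem lintegral_eq_lintegral_toSphere [FiniteDimensional ℝ E] [Nontrivial E]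
    (μ : Measure E) [μ.IsAddHaarMeasure] {f : E → ℝ≥0∞} (hf : Measurable f) :
    ∫⁻ x, f x ∂μ = ∫⁻ σ, (∫⁻ r in Ioi (0 : ℝ),
      ENNReal.ofReal (r ^ (Module.finrank ℝ E - 1)) * f (r • σ.1)) ∂μ.toSphere := by
  have hpolar := μ.measurePreserving_homeomorphUnitSphereProd.lintegral_comp_emb
    (homeomorphUnitSphereProd E).measurableEmbedding
    fun p : Metric.sphere (0 : E) 1 × Ioi (0 : ℝ) ↦ f (p.2.1 • p.1.1)
  calc ∫⁻ x, f x ∂μ = ∫⁻ x : ({0}ᶜ : Set E), f x ∂μ.comap (↑) := by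
        rw [lintegral_subtype_comap (measurableSet_singleton _).compl, restrict_compl_singleton]
    _ = _ := lintegral_congr fun x ↦ by
        rw [← homeomorphUnitSphereProd_symm_apply_coe, Homeomorph.symm_apply_apply]
    _ = _ := hpolar
    _ = _ := by
        rw [lintegral_prod _ (by fun_prop)]
        exact lintegral_congr fun σ ↦
          lintegral_volumeIoiPow _ (f := fun r ↦ f (r • σ.1)) (by fun_prop)

end Polar

theorem lintegral_polarCoord {f : ℝ × ℝ → ℝ≥0∞} (hf : Measurable f) :
    ∫⁻ p, f p = ∫⁻ θ in Ioo (-π) π, ∫⁻ r in Ioi (0 : ℝ),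
      ENNReal.ofReal r * f (r * cos θ, r * sin θ) := by
  have htarget : polarCoord.target = Ioi (0 : ℝ) ×ˢ Ioo (-π) π := rfl
  rw [← lintegral_comp_polarCoord_symm, htarget, Measure.volume_eq_prod,
    ← Measure.prod_restrict, lintegral_prod_symm]
  · simp only [polarCoord_symm_apply, smul_eq_mul]
  · simp only [polarCoord_symm_apply, smul_eq_mul]
    fun_prop

theorem lintegral_halfPlane_polarCoord {f : ℝ × ℝ → ℝ≥0∞} (hf : Measurable f) :
    ∫⁻ t, ∫⁻ s in Ioi (0 : ℝ), f (t, s) = ∫⁻ φ in Ioo 0 π, ∫⁻ r in Ioi (0 : ℝ),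
      ENNReal.ofReal r * f (r * cos φ, r * sin φ) := by
  have hS : MeasurableSet {p : ℝ × ℝ | 0 < p.2} := measurableSet_lt measurable_const measurable_snd
  have hhalf : ∫⁻ t, ∫⁻ s in Ioi (0 : ℝ), f (t, s) = ∫⁻ p, {p : ℝ × ℝ | 0 < p.2}.indicator f p := by
    rw [Measure.volume_eq_prod, lintegral_prod _ (hf.indicator hS).aemeasurable]
    refine lintegral_congr fun t ↦ ?_
    rw [← lintegral_indicator measurableSet_Ioi]
    rfl
  have hsub : Ioo 0 π ∩ Ioo (-π) π = Ioo 0 π :=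
    inter_eq_left.2 (Ioo_subset_Ioo_left (by linarith [pi_pos]))
  rw [hhalf, lintegral_polarCoord (hf.indicator hS), ← hsub,
    ← setLIntegral_indicator measurableSet_Ioo]
  refine setLIntegral_congr_fun measurableSet_Ioo fun φ hφ ↦ ?_
  by_cases h : φ ∈ Ioo 0 π
  · rw [indicator_of_mem h]
    refine setLIntegral_congr_fun measurableSet_Ioi fun r hr ↦ ?_
    simp [mul_pos (mem_Ioi.1 hr) (sin_pos_of_mem_Ioo h)]
  · rw [indicator_of_notMem h]
    have hs : sin φ ≤ 0 := sin_nonpos_of_nonpos_of_neg_pi_le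
      (not_lt.1 fun h' ↦ h ⟨h', hφ.2⟩) hφ.1.le
    rw [← lintegral_zero (μ := volume.restrict (Ioi (0 : ℝ)))]
    refine setLIntegral_congr_fun measurableSet_Ioi fun r hr ↦ ?_
    simp [(mul_nonpos_of_nonneg_of_nonpos (mem_Ioi.1 hr).le hs).not_gt]

theorem lintegral_eq_spherical {f : ℝ × ℝ × ℝ → ℝ≥0∞} (hf : Measurable f) :
    ∫⁻ p, f p = ∫⁻ φ in Ioo 0 π, ∫⁻ θ in Ioo (-π) π, ∫⁻ r in Ioi (0 : ℝ),
      ENNReal.ofReal r * (ENNReal.ofReal (r * sin φ) *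
        f (r * cos φ, r * sin φ * cos θ, r * sin φ * sin θ)) := by
  calc ∫⁻ p, f p = ∫⁻ t, ∫⁻ q, f (t, q) := by
        rw [Measure.volume_eq_prod, lintegral_prod _ hf.aemeasurable]
    _ = ∫⁻ t, ∫⁻ θ in Ioo (-π) π, ∫⁻ s in Ioi (0 : ℝ),
        ENNReal.ofReal s * f (t, s * cos θ, s * sin θ) :=
      lintegral_congr fun t ↦ lintegral_polarCoord (by fun_prop)
    _ = ∫⁻ θ in Ioo (-π) π, ∫⁻ t, ∫⁻ s in Ioi (0 : ℝ),
        ENNReal.ofReal s * f (t, s * cos θ, s * sin θ) := by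
      refine lintegral_lintegral_swap (Measurable.aemeasurable ?_)
      exact Measurable.lintegral_prod_right' (f := fun p : (ℝ × ℝ) × ℝ ↦
        ENNReal.ofReal p.2 * f (p.1.1, p.2 * cos p.1.2, p.2 * sin p.1.2)) (by fun_prop)
    _ = ∫⁻ θ in Ioo (-π) π, ∫⁻ φ in Ioo 0 π, ∫⁻ r in Ioi (0 : ℝ),
        ENNReal.ofReal r * (ENNReal.ofReal (r * sin φ) *
        f (r * cos φ, r * sin φ * cos θ, r * sin φ * sin θ)) :=
      lintegral_congr fun θ ↦ lintegral_halfPlane_polarCoord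
        (f := fun p ↦ ENNReal.ofReal p.2 * f (p.1, p.2 * cos θ, p.2 * sin θ)) (by fun_prop)
    _ = _ := by
      refine lintegral_lintegral_swap (Measurable.aemeasurable ?_)
      exact Measurable.lintegral_prod_right' (f := fun p : (ℝ × ℝ) × ℝ ↦
        ENNReal.ofReal p.2 * (ENNReal.ofReal (p.2 * sin p.1.2) *
        f (p.2 * cos p.1.2, p.2 * sin p.1.2 * cos p.1.1, p.2 * sin p.1.2 * sin p.1.1)))
        (by fun_prop)

theorem lintegral_sin_mul_comp_cos (f : ℝ → ℝ≥0∞) :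
    ∫⁻ φ in Ioo 0 π, ENNReal.ofReal (sin φ) * f (cos φ) = ∫⁻ t in Ioo (-1 : ℝ) 1, f t := by
  have himage : cos '' Ioo 0 π = Ioo (-1 : ℝ) 1 := by
    ext t
    constructor
    · rintro ⟨φ, hφ, rfl⟩
      have := sin_pos_of_mem_Ioo hφ
      have := sin_sq_add_cos_sq φ
      constructor <;> nlinarith
    · rintro ⟨h1, h2⟩
      exact ⟨arccos t, ⟨arccos_pos.2 h2, arccos_lt_pi.2 h1⟩, cos_arccos h1.le h2.le⟩
  rw [← himage, lintegral_image_eq_lintegral_abs_deriv_mul measurableSet_Ioo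
    (fun x _ ↦ (hasDerivAt_cos x).hasDerivWithinAt) (injOn_cos.mono Ioo_subset_Icc_self)]
  refine setLIntegral_congr_fun measurableSet_Ioo fun φ hφ ↦ ?_
  rw [abs_neg, abs_of_pos (sin_pos_of_mem_Ioo hφ)]

section Cylindrical

variable {E : Type*} [NormedAddCommGroup E] [InnerProductSpace ℝ E]
  (e : OrthonormalBasis (Fin 3) ℝ E)

/-- The point of the unit sphere of a three-dimensional space at height `t` along `e 0` and
azimuth `θ` around that axis. -/
noncomputable def cylPoint (t θ : ℝ) : E :=
  t • e 0 + (√(1 - t ^ 2) * cos θ) • e 1 + (√(1 - t ^ 2) * sin θ) • e 2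

@[simp]
theorem inner_zero_cylPoint (t θ : ℝ) : inner ℝ (e 0) (cylPoint e t θ) = t := by
  simp [cylPoint, inner_add_right, inner_smul_right, e.inner_eq_ite]

@[simp]
theorem inner_one_cylPoint (t θ : ℝ) :
    inner ℝ (e 1) (cylPoint e t θ) = √(1 - t ^ 2) * cos θ := by
  simp [cylPoint, inner_add_right, inner_smul_right, e.inner_eq_ite]

@[simp]
theorem inner_two_cylPoint (t θ : ℝ) :
    inner ℝ (e 2) (cylPoint e t θ) = √(1 - t ^ 2) * sin θ := by
  simp [cylPoint, inner_add_right, inner_smul_right, e.inner_eq_ite]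

theorem norm_cylPoint {t : ℝ} (ht : t ∈ Ioo (-1) 1) (θ : ℝ) : ‖cylPoint e t θ‖ = 1 := by
  rw [← sq_eq_sq₀ (norm_nonneg _) zero_le_one, ← e.sum_sq_norm_inner_right, Fin.sum_univ_three,
    inner_zero_cylPoint, inner_one_cylPoint, inner_two_cylPoint]
  simp only [norm_eq_abs, sq_abs, mul_pow, sq_sqrt (show 0 ≤ 1 - t ^ 2 by nlinarith [ht.1, ht.2])]
  linear_combination (1 - t ^ 2) * sin_sq_add_cos_sq θ

@[fun_prop]
theorem continuous_cylPoint : Continuous fun p : ℝ × ℝ ↦ cylPoint e p.1 p.2 := by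
  unfold cylPoint
  fun_prop

variable [MeasurableSpace E] [BorelSpace E] [FiniteDimensional ℝ E]

theorem lintegral_eq_lintegral_orthonormalBasis {f : E → ℝ≥0∞} (hf : Measurable f) :
    ∫⁻ x, f x = ∫⁻ p : ℝ × ℝ × ℝ, f (p.1 • e 0 + p.2.1 • e 1 + p.2.2 • e 2) := by
  have hsplit := (volume_preserving_piFinSuccAbove (fun _ : Fin 3 ↦ ℝ) 0).symm.comp
    ((MeasurePreserving.id volume).prod (volume_preserving_finTwoArrow ℝ).symm)
  have hpreserving := e.measurePreserving_repr_symm.comp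
    ((EuclideanSpace.volume_preserving_symm_measurableEquiv_toLp (Fin 3)).symm.comp hsplit)
  rw [← hpreserving.lintegral_comp hf]
  refine lintegral_congr fun p ↦ congrArg f ?_
  simp only [Function.comp_apply, MeasurableEquiv.symm_symm, MeasurableEquiv.coe_toLp,
    ← e.sum_repr_symm, Fin.sum_univ_three]
  rfl

theorem lintegral_eq_lintegral_smul_cylPoint {f : E → ℝ≥0∞} (hf : Measurable f) :
    ∫⁻ x, f x = ∫⁻ t in Ioo (-1 : ℝ) 1, ∫⁻ θ in Ioo (-π) π, ∫⁻ r in Ioi (0 : ℝ),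
      ENNReal.ofReal (r ^ 2) * f (r • cylPoint e t θ) := by
  rw [lintegral_eq_lintegral_orthonormalBasis e hf, lintegral_eq_spherical
    (f := fun p ↦ f (p.1 • e 0 + p.2.1 • e 1 + p.2.2 • e 2)) (by fun_prop),
    ← lintegral_sin_mul_comp_cos]
  refine setLIntegral_congr_fun measurableSet_Ioo fun φ hφ ↦ ?_
  have hsin : √(1 - cos φ ^ 2) = sin φ := by
    rw [← sin_sq, sqrt_sq (sin_pos_of_mem_Ioo hφ).le]
  simp_rw [← lintegral_const_mul' _ _ ENNReal.ofReal_ne_top]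
  refine lintegral_congr fun θ ↦ setLIntegral_congr_fun measurableSet_Ioi fun r hr ↦ ?_
  have hpoint : (r * cos φ) • e 0 + (r * sin φ * cos θ) • e 1 + (r * sin φ * sin θ) • e 2 =
      r • cylPoint e (cos φ) θ := by
    rw [cylPoint, hsin]
    module
  rw [hpoint, ENNReal.ofReal_mul (mem_Ioi.1 hr).le, ENNReal.ofReal_pow (mem_Ioi.1 hr).le]
  ring

theorem lintegral_toSphere_eq_lintegral_cylPoint {f : E → ℝ≥0∞} (hf : Measurable f) :
    ∫⁻ σ, f σ.1 ∂(volume : Measure E).toSphere =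
      ∫⁻ t in Ioo (-1 : ℝ) 1, ∫⁻ θ in Ioo (-π) π, f (cylPoint e t θ) := by
  have : Nontrivial E := ⟨e 0, 0, e.toBasis.ne_zero 0⟩
  have hrank : Module.finrank ℝ E = 3 := by
    rw [Module.finrank_eq_card_basis e.toBasis, Fintype.card_fin]
  have hpolar := lintegral_eq_lintegral_toSphere (volume : Measure E) (measurable_rayExtension 2 hf)
  rw [lintegral_eq_lintegral_smul_cylPoint e (measurable_rayExtension 2 hf), hrank,
    lintegral_congr fun σ ↦ lintegral_rayExtension_smul 2 f (norm_eq_of_mem_sphere σ)] at hpolar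
  rw [← hpolar]
  refine setLIntegral_congr_fun measurableSet_Ioo fun t ht ↦ lintegral_congr fun θ ↦ ?_
  exact lintegral_rayExtension_smul 2 f (norm_cylPoint e ht θ)

end Cylindrical

theorem lintegral_abs_deriv_mul_comp_le {s : Set ℝ} (hs : MeasurableSet s) {φ φ' : ℝ → ℝ}
    (hφ : ∀ x ∈ s, HasDerivWithinAt φ (φ' x) s x) (hinj : InjOn φ s) (f : ℝ → ℝ≥0∞) :
    ∫⁻ x in s, ENNReal.ofReal |φ' x| * f (φ x) ≤ ∫⁻ x, f x := by
  rw [← lintegral_image_eq_lintegral_abs_deriv_mul hs hφ hinj]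
  exact setLIntegral_le_lintegral _ _

theorem injOn_cos_Icc_neg_pi_zero : InjOn cos (Icc (-π) 0) := fun x hx y hy h ↦
  neg_injective <| injOn_cos ⟨neg_nonneg.2 hx.2, neg_le.1 hx.1⟩ ⟨neg_nonneg.2 hy.2, neg_le.1 hy.1⟩
    (by simpa only [cos_neg] using h)

theorem lintegral_abs_sin_mul_comp_cos_le (a b : ℝ) (f : ℝ → ℝ≥0∞) :
    ∫⁻ θ in Ioo (-π) π, ENNReal.ofReal |b * sin θ| * f (a + b * cos θ) ≤ 2 * ∫⁻ x, f x := by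
  rcases eq_or_ne b 0 with rfl | hb
  · simp
  have hderiv (θ : ℝ) : HasDerivAt (fun θ ↦ a + b * cos θ) (-(b * sin θ)) θ := by
    simpa using ((hasDerivAt_cos θ).const_mul b).const_add a
  have hpiece {s : Set ℝ} (hs : MeasurableSet s) (hinj : InjOn cos s) :
      ∫⁻ θ in s, ENNReal.ofReal |b * sin θ| * f (a + b * cos θ) ≤ ∫⁻ x, f x := by
    simpa only [abs_neg] using lintegral_abs_deriv_mul_comp_le hs
      (fun θ _ ↦ (hderiv θ).hasDerivWithinAt)
      (fun x hx y hy h ↦ hinj hx hy (mul_left_cancel₀ hb (add_left_cancel h))) f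
  have hcover : Ioo (-π) π ⊆ Icc (-π) 0 ∪ Icc 0 π := by
    rw [Icc_union_Icc_eq_Icc (by linarith [pi_pos]) pi_pos.le]
    exact Ioo_subset_Icc_self
  calc _ ≤ _ := lintegral_mono_set hcover
    _ ≤ _ := lintegral_union_le _ _ _
    _ ≤ _ := add_le_add (hpiece measurableSet_Icc injOn_cos_Icc_neg_pi_zero)
      (hpiece measurableSet_Icc injOn_cos)
    _ = _ := (two_mul _).symm

theorem lintegral_Ioo_comp_sub_of_periodic {f : ℝ → ℝ≥0∞} {T : ℝ} (hT : 0 < T)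
    (hf : Function.Periodic f T) (a b : ℝ) :
    ∫⁻ x in Ioo a (a + T), f (x - b) = ∫⁻ x in Ioo a (a + T), f x := by
  rw [setLIntegral_congr Ioo_ae_eq_Ioc, setLIntegral_congr Ioo_ae_eq_Ioc]
  have hshift := (measurePreserving_sub_right volume b).setLIntegral_comp_preimage_emb
    (MeasurableEquiv.subRight b).measurableEmbedding f (Ioc (a - b) (a - b + T))
  rw [preimage_sub_const_Ioc, sub_add_cancel, sub_add_eq_add_sub, sub_add_cancel] at hshift
  rw [hshift, ← sub_add_eq_add_sub]
  refine (isAddFundamentalDomain_Ioc hT _).setLIntegral_eq (isAddFundamentalDomain_Ioc hT _) f ?_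
  rintro ⟨_, n, rfl⟩ x
  simpa [add_comm] using hf.zsmul n x

theorem lintegral_abs_cos_mul_comp_sin_le (f : ℝ → ℝ≥0∞) :
    ∫⁻ θ in Ioo (-π) π, ENNReal.ofReal |cos θ| * f (sin θ) ≤ 2 * ∫⁻ x, f x := by
  have hperiodic : Function.Periodic (fun θ ↦ ENNReal.ofReal |sin θ| * f (cos θ)) (2 * π) :=
    fun θ ↦ by simp only [sin_add_two_pi, cos_add_two_pi]
  have hshift := lintegral_Ioo_comp_sub_of_periodic two_pi_pos hperiodic (-π) (π / 2)
  simp only [sin_sub_pi_div_two, cos_sub_pi_div_two, abs_neg,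
    show -π + 2 * π = π by ring] at hshift
  rw [hshift]
  simpa using lintegral_abs_sin_mul_comp_cos_le 0 1 f

theorem lintegral_Icc_inv_sqrt_abs_ne_top :
    ∫⁻ x in Icc (-1) 1, ENNReal.ofReal (1 / √|x|) ≠ ∞ := by
  have hint : IntegrableOn (fun x : ℝ ↦ 1 / √|x|) (Metric.ball 0 2) := by
    refine integrableOn_ball_of_norm_le_rpow (C := 1) (α := 1 / 2) (by simp)
      (by norm_num) (Filter.Eventually.of_forall fun x ↦ ?_)
      (by fun_prop : Measurable fun x : ℝ ↦ 1 / √|x|).aestronglyMeasurable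
    rw [norm_of_nonneg (by positivity), sqrt_eq_rpow, rpow_neg (norm_nonneg x), one_mul, one_div,
      norm_eq_abs]
  refine (hint.mono_set fun x hx ↦ ?_).lintegral_lt_top.ne
  rw [mem_ball_zero_iff, norm_eq_abs]
  exact (abs_le.2 hx).trans_lt one_lt_two

theorem one_div_sqrt_abs_mul_le {s c : ℝ} (h : s ^ 2 + c ^ 2 = 1) :
    1 / √|s * c| ≤ |s| * (1 / √|c|) + |c| * (1 / √|s|) := by
  rcases eq_or_ne s 0 with rfl | hs
  · simp
  rcases eq_or_ne c 0 with rfl | hc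
  · simp
  have hs' := sqrt_pos.2 (abs_pos.2 hs)
  have hc' := sqrt_pos.2 (abs_pos.2 hc)
  have hss := sq_sqrt (abs_nonneg s)
  have hcc := sq_sqrt (abs_nonneg c)
  rw [abs_mul, sqrt_mul (abs_nonneg s)]
  have hs1 : √|s| ≤ 1 := sqrt_le_one.2 (by rw [← sq_le_one_iff_abs_le_one]; nlinarith)
  have hc1 : √|c| ≤ 1 := sqrt_le_one.2 (by rw [← sq_le_one_iff_abs_le_one]; nlinarith)
  rw [← sq_abs s, ← sq_abs c, ← hss, ← hcc] at h
  rw [← hss, ← hcc, sqrt_sq hs'.le, sqrt_sq hc'.le]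
  field_simp
  nlinarith [pow_pos hs' 3, pow_pos hc' 3]

theorem lintegral_inv_sqrt_abs_sin_mul_cos_ne_top :
    ∫⁻ θ in Ioo (-π) π, ENNReal.ofReal (1 / √|sin θ * cos θ|) ≠ ∞ := by
  set f : ℝ → ℝ≥0∞ := (Icc (-1) 1).indicator fun x ↦ ENNReal.ofReal (1 / √|x|) with hf
  have hfm : Measurable f := Measurable.indicator (by fun_prop) measurableSet_Icc
  have hsin := lintegral_abs_cos_mul_comp_sin_le f
  have hcos := lintegral_abs_sin_mul_comp_cos_le 0 1 f
  simp only [one_mul, zero_add] at hcos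
  have hfin : ∫⁻ x, f x ≠ ∞ := by
    rw [hf, lintegral_indicator measurableSet_Icc]
    exact lintegral_Icc_inv_sqrt_abs_ne_top
  refine ne_top_of_le_ne_top (b := 2 * (∫⁻ x, f x) + 2 * ∫⁻ x, f x) (by finiteness) ?_
  refine le_trans ?_ (add_le_add hsin hcos)
  rw [← lintegral_add_left (by fun_prop)]
  refine lintegral_mono fun θ ↦ ?_
  rw [hf, indicator_of_mem (sin_mem_Icc θ), indicator_of_mem (cos_mem_Icc θ), add_comm,
    ← ENNReal.ofReal_mul (abs_nonneg _), ← ENNReal.ofReal_mul (abs_nonneg _),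
    ← ENNReal.ofReal_add (by positivity) (by positivity)]
  exact ENNReal.ofReal_le_ofReal (one_div_sqrt_abs_mul_le (sin_sq_add_cos_sq θ))

theorem lintegral_inv_one_add_sq :
    ∫⁻ x : ℝ, ENNReal.ofReal (1 + x ^ 2)⁻¹ = ENNReal.ofReal π := by
  rw [← ofReal_integral_eq_lintegral_ofReal integrable_inv_one_add_sq
    (Filter.Eventually.of_forall fun x ↦ by positivity), integral_univ_inv_one_add_sq]

theorem cos_half_pos {θ : ℝ} (hθ : θ ∈ Ioo (-π) π) : 0 < cos (θ / 2) :=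
  cos_pos_of_mem_Ioo ⟨by linarith [hθ.1], by linarith [hθ.2]⟩

theorem injOn_tan_half : InjOn (fun θ ↦ tan (θ / 2)) (Ioo (-π) π) := fun x hx y hy h ↦ by
  have := injOn_tan ⟨by linarith [hx.1], by linarith [hx.2]⟩
    ⟨by linarith [hy.1], by linarith [hy.2]⟩ h
  linarith

theorem abs_div_sub_mul_cos_eq {a b c θ : ℝ} (hab : 0 < a + b) (h : b ^ 2 + c ^ 2 = a ^ 2)
    (hc : c ≠ 0) (hθ : cos (θ / 2) ≠ 0) :
    |c| / (a - b * cos θ) = 2 * ((a + b) / |c| * (1 / cos (θ / 2) ^ 2 * (1 / 2)) *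
      (1 + ((a + b) / |c| * tan (θ / 2)) ^ 2)⁻¹) := by
  have hdiff : a - b = |c| ^ 2 / (a + b) := by
    rw [eq_div_iff hab.ne', sq_abs]
    linear_combination -h
  have hden : a - b * cos θ = (a - b) * cos (θ / 2) ^ 2 + (a + b) * sin (θ / 2) ^ 2 := by
    rw [show cos θ = cos (2 * (θ / 2)) by ring_nf, cos_two_mul']
    linear_combination (-a) * sin_sq_add_cos_sq (θ / 2)
  rw [hden, hdiff, tan_eq_sin_div_cos]
  field_simp

-- The integrand is twice the pullback of `dx / (1 + x ^ 2)` under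
-- `x = (a + b) / |c| * tan (θ / 2)`.
theorem lintegral_abs_div_sub_mul_cos_le {a b c : ℝ} (ha : 0 ≤ a) (h : b ^ 2 + c ^ 2 = a ^ 2) :
    ∫⁻ θ in Ioo (-π) π, ENNReal.ofReal (|c| / (a - b * cos θ)) ≤ ENNReal.ofReal (2 * π) := by
  rcases eq_or_ne c 0 with rfl | hc
  · simp
  have hba : |b| < a := abs_lt_of_sq_lt_sq (by nlinarith [sq_pos_of_ne_zero hc]) ha
  have hab : 0 < a + b := by linarith [neg_abs_le b]
  have hslope : 0 < (a + b) / |c| := div_pos hab (abs_pos.2 hc)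
  have hderiv {θ : ℝ} (hθ : θ ∈ Ioo (-π) π) :
      HasDerivAt (fun θ ↦ (a + b) / |c| * tan (θ / 2))
        ((a + b) / |c| * (1 / cos (θ / 2) ^ 2 * (1 / 2))) θ :=
    ((hasDerivAt_tan (cos_half_pos hθ).ne').comp θ ((hasDerivAt_id θ).div_const 2)).const_mul _
  have hsubst := lintegral_abs_deriv_mul_comp_le measurableSet_Ioo
    (fun θ hθ ↦ (hderiv hθ).hasDerivWithinAt)
    (fun x hx y hy h ↦ injOn_tan_half hx hy (mul_left_cancel₀ hslope.ne' h))
    fun x ↦ ENNReal.ofReal (1 + x ^ 2)⁻¹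
  rw [lintegral_inv_one_add_sq] at hsubst
  rw [ENNReal.ofReal_mul zero_le_two]
  refine le_trans (le_of_eq ?_) (mul_le_mul' le_rfl hsubst)
  rw [← lintegral_const_mul' _ _ ENNReal.ofReal_ne_top]
  refine setLIntegral_congr_fun measurableSet_Ioo fun θ hθ ↦ ?_
  rw [abs_div_sub_mul_cos_eq hab h hc (cos_half_pos hθ).ne', ENNReal.ofReal_mul zero_le_two,
    ENNReal.ofReal_mul (mul_nonneg hslope.le (by positivity)),
    abs_of_nonneg (mul_nonneg hslope.le (by positivity))]

theorem abs_sub_mul_div_one_sub_sq_le {t α s : ℝ} (hs : |s| ≤ 1) :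
    |t - α * s| / (1 - s ^ 2) ≤ |t - α| / (1 - s) + |t + α| / (1 + s) := by
  rw [abs_le] at hs
  rcases hs.1.eq_or_lt with rfl | hs1
  · norm_num
    positivity
  rcases hs.2.eq_or_lt with rfl | hs2
  · norm_num
    positivity
  have hminus : 0 < 1 - s := by linarith
  have hplus : 0 < 1 + s := by linarith
  have hsplit : t - α * s = ((t - α) * (1 + s) + (t + α) * (1 - s)) / 2 := by ring
  have htri : |t - α * s| ≤ |t - α| * (1 + s) + |t + α| * (1 - s) := by
    rw [hsplit, abs_div, abs_two]
    refine (half_le_self (abs_nonneg _)).trans ((abs_add_le _ _).trans_eq ?_)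
    rw [abs_mul, abs_mul, abs_of_pos hminus, abs_of_pos hplus]
  rw [show 1 - s ^ 2 = (1 - s) * (1 + s) by ring, div_add_div _ _ hminus.ne' hplus.ne']
  gcongr
  linarith

theorem lintegral_abs_sub_mul_div_one_sub_sq_le {α β t ρ : ℝ} (hαβ : α ^ 2 + β ^ 2 = 1)
    (htρ : t ^ 2 + ρ ^ 2 = 1) :
    ∫⁻ θ in Ioo (-π) π, ENNReal.ofReal (|t - α * (α * t + β * (ρ * cos θ))| /
      (1 - (α * t + β * (ρ * cos θ)) ^ 2)) ≤ ENNReal.ofReal (2 * π) + ENNReal.ofReal (2 * π) := by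
  have hαt : |α * t| ≤ 1 := abs_le_one_iff_mul_self_le_one.2 (by nlinarith)
  rw [abs_le] at hαt
  have hminus := lintegral_abs_div_sub_mul_cos_le (a := 1 - α * t) (b := β * ρ) (c := t - α)
    (by linarith) (by linear_combination hαβ * ρ ^ 2 + htρ * (1 - α ^ 2))
  have hplus := lintegral_abs_div_sub_mul_cos_le (a := 1 + α * t) (b := -(β * ρ)) (c := t + α)
    (by linarith) (by linear_combination hαβ * ρ ^ 2 + htρ * (1 - α ^ 2))
  refine le_trans ?_ (add_le_add hminus hplus)
  rw [← lintegral_add_left (by fun_prop)]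
  refine lintegral_mono fun θ ↦ ?_
  have hs : |α * t + β * (ρ * cos θ)| ≤ 1 := by
    refine abs_le_one_iff_mul_self_le_one.2 ?_
    have hlagrange : 1 - (α * t + β * (ρ * cos θ)) * (α * t + β * (ρ * cos θ)) =
        (α * (ρ * cos θ) - β * t) ^ 2 + (ρ * sin θ) ^ 2 := by
      linear_combination -hαβ * (t ^ 2 + ρ ^ 2 * cos θ ^ 2) - htρ - ρ ^ 2 * sin_sq_add_cos_sq θ
    linarith [sq_nonneg (α * (ρ * cos θ) - β * t), sq_nonneg (ρ * sin θ)]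
  have hs' := abs_le.1 hs
  rw [← ENNReal.ofReal_add
    (div_nonneg (abs_nonneg _) (by linarith)) (div_nonneg (abs_nonneg _) (by linarith))]
  refine ENNReal.ofReal_le_ofReal ((abs_sub_mul_div_one_sub_sq_le hs).trans_eq ?_)
  ring_nf

section SliceEstimates

variable {E : Type*} [NormedAddCommGroup E] [InnerProductSpace ℝ E]

theorem exists_orthonormalBasis_adapted [FiniteDimensional ℝ E] (hE : Module.finrank ℝ E = 3)
    (u w : E) : ∃ e : OrthonormalBasis (Fin 3) ℝ E, ∃ α β γ : ℝ,
      u = α • e 0 ∧ w = β • e 0 + γ • e 1 := by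
  set e := InnerProductSpace.gramSchmidtOrthonormalBasis (𝕜 := ℝ) (by simpa using hE) ![u, w, 0]
  have htri {i j : Fin 3} (hij : i < j) : inner ℝ (e j) (![u, w, 0] i) = 0 :=
    InnerProductSpace.gramSchmidtOrthonormalBasis_inv_triangular _ _ hij
  refine ⟨e, inner ℝ (e 0) u, inner ℝ (e 0) w, inner ℝ (e 1) w, ?_, ?_⟩
  · nth_rw 1 [← e.sum_repr' u]
    have h1 : inner ℝ (e 1) u = 0 := htri (i := 0) (by decide)
    have h2 : inner ℝ (e 2) u = 0 := htri (i := 0) (by decide)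
    simp [Fin.sum_univ_three, h1, h2]
  · nth_rw 1 [← e.sum_repr' w]
    have h2 : inner ℝ (e 2) w = 0 := htri (i := 1) (by decide)
    simp [Fin.sum_univ_three, h2]

theorem exists_orthonormalBasis_adapted_of_linearIndependent [FiniteDimensional ℝ E]
    (hE : Module.finrank ℝ E = 3) {u w : E} (h : LinearIndependent ℝ ![u, w]) :
    ∃ e : OrthonormalBasis (Fin 3) ℝ E, ∃ α β γ : ℝ,
      α ≠ 0 ∧ γ ≠ 0 ∧ u = α • e 0 ∧ w = β • e 0 + γ • e 1 := by
  obtain ⟨e, α, β, γ, hu, hw⟩ := exists_orthonormalBasis_adapted hE u w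
  rw [LinearIndependent.pair_iff] at h
  have hα : α ≠ 0 := by
    rintro rfl
    exact one_ne_zero (h 1 0 (by simp [hu])).1
  refine ⟨e, α, β, γ, hα, ?_, hu, hw⟩
  rintro rfl
  exact hα (neg_eq_zero.1 (h β (-α) (by rw [hu, hw]; module)).2)

variable [MeasurableSpace E] [BorelSpace E]

@[fun_prop]
theorem measurable_cylPoint (e : OrthonormalBasis (Fin 3) ℝ E) (t : ℝ) :
    Measurable (cylPoint e t) :=
  ((continuous_cylPoint e).comp (Continuous.prodMk_right t)).measurable

variable [FiniteDimensional ℝ E]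

theorem lintegral_toSphere_comp_inner_mul_le (e : OrthonormalBasis (Fin 3) ℝ E) {κ : ℝ}
    (hκ : κ ≠ 0) {f : ℝ → ℝ≥0∞} {W : E → ℝ≥0∞} (hf : Measurable f) (hW : Measurable W) {M : ℝ≥0∞}
    (hM : ∀ t ∈ Ioo (-1) 1, ∫⁻ θ in Ioo (-π) π, W (cylPoint e t θ) ≤ M) :
    ∫⁻ σ, f (inner ℝ (κ • e 0) σ.1) * W σ.1 ∂(volume : Measure E).toSphere ≤
      (ENNReal.ofReal |κ|)⁻¹ * M * ∫⁻ x, f x := by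
  have hscale := lintegral_abs_deriv_mul_comp_le (measurableSet_Ioo (a := (-1 : ℝ)) (b := 1))
    (fun x _ ↦ ((hasDerivAt_id x).const_mul κ).hasDerivWithinAt)
    (mul_right_injective₀ hκ).injOn f
  rw [lintegral_const_mul _ (by fun_prop), mul_one,
    ENNReal.mul_le_iff_le_inv (by simpa using hκ) ENNReal.ofReal_ne_top] at hscale
  rw [lintegral_toSphere_eq_lintegral_cylPoint e
    (f := fun x ↦ f (inner ℝ (κ • e 0) x) * W x) (by fun_prop)]
  calc _ = ∫⁻ t in Ioo (-1 : ℝ) 1, f (κ * t) * ∫⁻ θ in Ioo (-π) π, W (cylPoint e t θ) := by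
        simp only [real_inner_smul_left, inner_zero_cylPoint]
        exact lintegral_congr fun t ↦ lintegral_const_mul _ (by fun_prop)
    _ ≤ ∫⁻ t in Ioo (-1 : ℝ) 1, f (κ * t) * M :=
        setLIntegral_mono' measurableSet_Ioo fun t ht ↦ mul_le_mul' le_rfl (hM t ht)
    _ = (∫⁻ t in Ioo (-1 : ℝ) 1, f (κ * t)) * M := lintegral_mul_const _ (by fun_prop)
    _ ≤ _ := mul_le_mul' hscale le_rfl
    _ = _ := by ring

theorem exists_lintegral_comp_inner_le (hE : Module.finrank ℝ E = 3) {u : E} (hu : u ≠ 0) :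
    ∃ C ≠ ∞, ∀ f : ℝ → ℝ≥0∞, Measurable f →
      ∫⁻ σ, f (inner ℝ u σ.1) ∂(volume : Measure E).toSphere ≤ C * ∫⁻ x, f x := by
  obtain ⟨e, κ, -, -, rfl, -⟩ := exists_orthonormalBasis_adapted hE u 0
  have hκ : κ ≠ 0 := fun h ↦ hu (by rw [h, zero_smul])
  refine ⟨(ENNReal.ofReal |κ|)⁻¹ * volume (Ioo (-π) π), ?_, fun f hf ↦ ?_⟩
  · rw [Real.volume_Ioo]
    finiteness [show ENNReal.ofReal |κ| ≠ 0 by simpa using hκ]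
  · simpa only [Pi.one_apply, mul_one, setLIntegral_one] using
      lintegral_toSphere_comp_inner_mul_le e hκ hf measurable_one fun t _ ↦ by simp

theorem ae_toSphere_inner_ne_zero (hE : Module.finrank ℝ E = 3) {u : E} (hu : u ≠ 0) :
    ∀ᵐ σ ∂(volume : Measure E).toSphere, inner ℝ u σ.1 ≠ 0 := by
  obtain ⟨C, -, hC⟩ := exists_lintegral_comp_inner_le hE hu
  have hm : Measurable (indicator ({0} : Set ℝ) (1 : ℝ → ℝ≥0∞)) :=
    measurable_one.indicator (measurableSet_singleton 0)
  have hzero := hC _ hm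
  rw [lintegral_indicator_one (measurableSet_singleton 0), volume_singleton, mul_zero,
    nonpos_iff_eq_zero, lintegral_eq_zero_iff (by fun_prop)] at hzero
  filter_upwards [hzero] with σ hσ h0
  simp [h0] at hσ

theorem exists_lintegral_comp_inner_mul_comp_inner_le (hE : Module.finrank ℝ E = 3) {u w n : E}
    (huw : LinearIndependent ℝ ![u, w]) (hu : inner ℝ u n = 0) (hw : inner ℝ w n = 0) :
    ∃ C ≠ ∞, ∀ f g : ℝ → ℝ≥0∞, Measurable f → Measurable g →
      ∫⁻ σ, f (inner ℝ u σ.1) * (g (inner ℝ w σ.1) * ENNReal.ofReal |inner ℝ n σ.1|)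
        ∂(volume : Measure E).toSphere ≤ C * ((∫⁻ x, f x) * ∫⁻ x, g x) := by
  obtain ⟨e, κ, β, γ, hκ, hγ, rfl, rfl⟩ :=
    exists_orthonormalBasis_adapted_of_linearIndependent hE huw
  have hn (x : E) : inner ℝ n x = inner ℝ (e 2) n * inner ℝ (e 2) x := by
    have h0 : inner ℝ n (e 0) = 0 := by
      rw [real_inner_comm]
      simpa [inner_smul_left, hκ] using hu
    have h1 : inner ℝ n (e 1) = 0 := by
      rw [real_inner_comm] at h0 ⊢
      simpa [inner_add_left, inner_smul_left, hγ, h0] using hw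
    rw [← e.sum_inner_mul_inner n x, Fin.sum_univ_three, h0, h1, real_inner_comm n]
    ring
  set ν := inner ℝ (e 2) n
  have hκ' : ENNReal.ofReal |κ| ≠ 0 := by simpa using hκ
  refine ⟨(ENNReal.ofReal |κ|)⁻¹ * (ENNReal.ofReal |ν / γ| * 2), by finiteness,
    fun f g hf hg ↦ ?_⟩
  have hslice (t : ℝ) : ∫⁻ θ in Ioo (-π) π, g (inner ℝ (β • e 0 + γ • e 1) (cylPoint e t θ)) *
      ENNReal.ofReal |inner ℝ n (cylPoint e t θ)| ≤ ENNReal.ofReal |ν / γ| * (2 * ∫⁻ x, g x) := by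
    grw [← lintegral_abs_sin_mul_comp_cos_le (β * t) (γ * √(1 - t ^ 2)) g,
      ← lintegral_const_mul' _ _ ENNReal.ofReal_ne_top]
    refine lintegral_mono fun θ ↦ le_of_eq ?_
    simp only [hn, inner_add_left, real_inner_smul_left, inner_zero_cylPoint, inner_one_cylPoint,
      inner_two_cylPoint]
    rw [← mul_assoc (ENNReal.ofReal _), ← ENNReal.ofReal_mul (abs_nonneg _), ← abs_mul,
      mul_comm (g _), mul_assoc γ, ← mul_assoc (ν / γ), div_mul_cancel₀ ν hγ, mul_assoc γ]
  refine (lintegral_toSphere_comp_inner_mul_le e hκ hf (W := fun x ↦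
    g (inner ℝ (β • e 0 + γ • e 1) x) * ENNReal.ofReal |inner ℝ n x|) (by fun_prop)
    fun t _ ↦ hslice t).trans_eq ?_
  ring

theorem exists_lintegral_comp_inner_mul_sqrt_le (e : OrthonormalBasis (Fin 3) ℝ E) {κ : ℝ}
    (hκ : κ ≠ 0) :
    ∃ C ≠ ∞, ∀ f : ℝ → ℝ≥0∞, Measurable f →
      ∫⁻ σ, f (inner ℝ (κ • e 0) σ.1) * ENNReal.ofReal √((1 - inner ℝ (e 0) σ.1 ^ 2) /
        |inner ℝ (e 1) σ.1 * inner ℝ (e 2) σ.1|) ∂(volume : Measure E).toSphere ≤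
      C * ∫⁻ x, f x := by
  have hfin := lintegral_inv_sqrt_abs_sin_mul_cos_ne_top
  have hκ' : ENNReal.ofReal |κ| ≠ 0 := by simpa using hκ
  refine ⟨_, by finiteness, fun f hf ↦ lintegral_toSphere_comp_inner_mul_le e hκ hf
    (W := fun x ↦ ENNReal.ofReal √((1 - inner ℝ (e 0) x ^ 2) / |inner ℝ (e 1) x * inner ℝ (e 2) x|))
    (by fun_prop) fun t ht ↦ lintegral_mono fun θ ↦ le_of_eq ?_⟩
  have ht' : 0 < 1 - t ^ 2 := by nlinarith [ht.1, ht.2]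
  simp only [inner_zero_cylPoint, inner_one_cylPoint, inner_two_cylPoint]
  rw [mul_mul_mul_comm, mul_self_sqrt ht'.le, abs_mul, abs_of_pos ht', mul_comm (cos θ),
    ← div_div, div_self ht'.ne', sqrt_div zero_le_one, sqrt_one]

theorem exists_lintegral_comp_inner_mul_abs_div_le (hE : Module.finrank ℝ E = 3) {c p : E}
    (hc : c ≠ 0) (hp : ‖p‖ = 1) :
    ∃ C ≠ ∞, ∀ f : ℝ → ℝ≥0∞, Measurable f →
      ∫⁻ σ, f (inner ℝ c σ.1) * ENNReal.ofReal (|inner ℝ c σ.1 - inner ℝ c p * inner ℝ p σ.1| /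
        (1 - inner ℝ p σ.1 ^ 2)) ∂(volume : Measure E).toSphere ≤ C * ∫⁻ x, f x := by
  obtain ⟨e, κ, α, β, rfl, hpe⟩ := exists_orthonormalBasis_adapted hE c p
  have hκ : κ ≠ 0 := fun h ↦ hc (by rw [h, zero_smul])
  have hκ' : ENNReal.ofReal |κ| ≠ 0 := by simpa using hκ
  have hα : inner ℝ (e 0) p = α := by simp [hpe, inner_add_right, inner_smul_right]
  have hβ : inner ℝ (e 1) p = β := by simp [hpe, inner_add_right, inner_smul_right]
  have hαβ : α ^ 2 + β ^ 2 = 1 := by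
    have h2 : inner ℝ (e 2) p = 0 := by simp [hpe, inner_add_right, inner_smul_right]
    have hsum := e.sum_sq_norm_inner_right p
    simpa [Fin.sum_univ_three, hα, hβ, h2, hp] using hsum
  refine ⟨_, by finiteness, fun f hf ↦ lintegral_toSphere_comp_inner_mul_le e hκ hf (W := fun x ↦
    ENNReal.ofReal (|inner ℝ (κ • e 0) x - inner ℝ (κ • e 0) p * inner ℝ p x| /
      (1 - inner ℝ p x ^ 2))) (M := ENNReal.ofReal |κ| * (ENNReal.ofReal (2 * π) +
        ENNReal.ofReal (2 * π))) (by fun_prop) fun t ht ↦ ?_⟩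
  have hρ := sq_sqrt (show 0 ≤ 1 - t ^ 2 by nlinarith [ht.1, ht.2])
  grw [← lintegral_abs_sub_mul_div_one_sub_sq_le hαβ (t := t) (ρ := √(1 - t ^ 2)) (by linarith),
    ← lintegral_const_mul' _ _ ENNReal.ofReal_ne_top]
  refine lintegral_mono fun θ ↦ le_of_eq ?_
  simp only [← ENNReal.ofReal_mul (abs_nonneg κ), mul_div_assoc', ← abs_mul, real_inner_smul_left,
    inner_zero_cylPoint, hα]
  simp only [hpe, inner_add_left, real_inner_smul_left, inner_zero_cylPoint, inner_one_cylPoint]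
  rw [mul_sub, mul_assoc κ]

end SliceEstimates

theorem linearIndependent_pair_of_ne {ι R M : Type*} [Semiring R] [AddCommMonoid M] [Module R M]
    {v : ι → M} (hv : LinearIndependent R v) {i j : ι} (hij : i ≠ j) :
    LinearIndependent R ![v i, v j] := by
  convert hv.comp ![i, j] (by simpa [Function.Injective, Fin.forall_fin_two, eq_comm] using hij)
    using 1
  exact List.ofFn_inj.1 rfl

theorem exists_orthogonal_and_one_le_abs_inner {ι E : Type*} [NormedAddCommGroup E]
    [InnerProductSpace ℝ E] [FiniteDimensional ℝ E] (b : Module.Basis ι ℝ E) :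
    ∃ n : ι → E, (∀ i j, j ≠ i → inner ℝ (b j) (n i) = 0) ∧
      ∀ x : E, ‖x‖ = 1 → ∃ i, 1 ≤ |inner ℝ (n i) x| := by
  classical
  have := FiniteDimensional.fintypeBasisIndex b
  set dual : ι → E := fun i ↦ (InnerProductSpace.toDual ℝ E).symm (b.coord i).toContinuousLinearMap
  have hdual (i : ι) (x : E) : inner ℝ (dual i) x = b.repr x i := by simp [dual]
  refine ⟨fun i ↦ ((Fintype.card ι : ℝ) * ‖b i‖) • dual i, fun i j hij ↦ ?_, fun x hx ↦ ?_⟩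
  · rw [real_inner_comm, real_inner_smul_left, hdual, b.repr_self_apply, if_neg hij, mul_zero]
  by_contra! hlt
  have hι : Nonempty ι := by
    by_contra! hempty
    have hx0 : x = 0 := by rw [← b.sum_repr x, Finset.univ_eq_empty, Finset.sum_empty]
    simp [hx0] at hx
  have hsum : 1 ≤ ∑ i, ‖b i‖ * |b.repr x i| := by
    rw [← hx]
    nth_rw 1 [← b.sum_repr x]
    refine (norm_sum_le _ _).trans_eq (Finset.sum_congr rfl fun i _ ↦ ?_)
    rw [norm_smul, Real.norm_eq_abs, mul_comm]
  have hcard : ∑ i, (Fintype.card ι : ℝ) * (‖b i‖ * |b.repr x i|) < ∑ _i : ι, (1 : ℝ) :=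
    Finset.sum_lt_sum_of_nonempty Finset.univ_nonempty fun i _ ↦ by
      simpa [real_inner_smul_left, hdual, abs_mul, mul_assoc] using hlt i
  rw [← Finset.mul_sum] at hcard
  simp only [Finset.sum_const, Finset.card_univ, nsmul_eq_mul, mul_one] at hcard
  nlinarith [show (0 : ℝ) < Fintype.card ι by exact_mod_cast Fintype.card_pos]

theorem rpow_one_fifth_mul_eq_of_mul_sq_mul_eq_one {z X Y : ℝ≥0∞} (h : z * X ^ 2 * Y = 1)
    (w f g k : ℝ≥0∞) :
    w ^ (1 / 5 : ℝ) * (f ^ (1 / 5 : ℝ) * g ^ (3 / 5 : ℝ) * k ^ (3 / 5 : ℝ)) =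
      (g * (k * z)) ^ (1 / 5 : ℝ) * (g * X) ^ (2 / 5 : ℝ) * (k * (f * w)) ^ (1 / 5 : ℝ) *
        (k * Y) ^ (1 / 5 : ℝ) := by
  have h2 (x : ℝ≥0∞) : x ^ (2 / 5 : ℝ) = (x ^ (1 / 5 : ℝ)) ^ 2 := by
    rw [← ENNReal.rpow_mul_natCast]
    norm_num
  have h3 (x : ℝ≥0∞) : x ^ (3 / 5 : ℝ) = (x ^ (1 / 5 : ℝ)) ^ 3 := by
    rw [← ENNReal.rpow_mul_natCast]
    norm_num
  have hmul (x y : ℝ≥0∞) : (x * y) ^ (1 / 5 : ℝ) = x ^ (1 / 5 : ℝ) * y ^ (1 / 5 : ℝ) :=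
    ENNReal.mul_rpow_of_nonneg _ _ (by norm_num)
  have hone : z ^ (1 / 5 : ℝ) * (X ^ (1 / 5 : ℝ)) ^ 2 * Y ^ (1 / 5 : ℝ) = 1 := by
    rw [← ENNReal.one_rpow (1 / 5), ← h, pow_two, pow_two, hmul, hmul, hmul]
  simp only [h2, h3, hmul]
  calc _ = w ^ (1 / 5 : ℝ) * (f ^ (1 / 5 : ℝ) * (g ^ (1 / 5 : ℝ)) ^ 3 * (k ^ (1 / 5 : ℝ)) ^ 3) *
        (z ^ (1 / 5 : ℝ) * (X ^ (1 / 5 : ℝ)) ^ 2 * Y ^ (1 / 5 : ℝ)) := by rw [hone, mul_one]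
    _ = _ := by ring

theorem lintegral_rpow_one_fifth_mul_le {α : Type*} [MeasurableSpace α] {μ : Measure α}
    {w f g k z X Y : α → ℝ≥0∞} (hw : Measurable w) (hf : Measurable f) (hg : Measurable g)
    (hk : Measurable k) (hz : Measurable z) (hX : Measurable X) (hY : Measurable Y)
    (h : ∀ᵐ a ∂μ, z a * X a ^ 2 * Y a = 1) :
    ∫⁻ a, w a ^ (1 / 5 : ℝ) * (f a ^ (1 / 5 : ℝ) * g a ^ (3 / 5 : ℝ) * k a ^ (3 / 5 : ℝ)) ∂μ ≤
      (∫⁻ a, g a * (k a * z a) ∂μ) ^ (1 / 5 : ℝ) * (∫⁻ a, g a * X a ∂μ) ^ (2 / 5 : ℝ) *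
        (∫⁻ a, k a * (f a * w a) ∂μ) ^ (1 / 5 : ℝ) * (∫⁻ a, k a * Y a ∂μ) ^ (1 / 5 : ℝ) := by
  have hholder := ENNReal.lintegral_prod_norm_pow_le (μ := μ) Finset.univ
    (f := ![fun a ↦ g a * (k a * z a), fun a ↦ g a * X a, fun a ↦ k a * (f a * w a),
      fun a ↦ k a * Y a])
    (fun i _ ↦ by fin_cases i <;> exact Measurable.aemeasurable (by dsimp; fun_prop))
    (p := ![1 / 5, 2 / 5, 1 / 5, 1 / 5])
    (by simp only [Fin.sum_univ_four, Matrix.cons_val]; norm_num)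
    (fun i _ ↦ by fin_cases i <;> norm_num)
  simp only [Fin.prod_univ_four, Matrix.cons_val] at hholder
  refine le_trans (lintegral_mono_ae ?_) hholder
  filter_upwards [h] with a ha
  exact (rpow_one_fifth_mul_eq_of_mul_sq_mul_eq_one ha _ _ _ _).le

theorem lintegral_rpow_three_fifths_mul_le {α : Type*} [MeasurableSpace α] {μ : Measure α}
    {w f g k : α → ℝ≥0∞} (hw : Measurable w) (hf : Measurable f) (hg : Measurable g)
    (hk : Measurable k) :
    ∫⁻ a, w a ^ (3 / 5 : ℝ) * (f a ^ (1 / 5 : ℝ) * g a ^ (3 / 5 : ℝ) * k a ^ (3 / 5 : ℝ)) ∂μ ≤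
      (∫⁻ a, g a * (k a * w a) ∂μ) ^ (3 / 5 : ℝ) * (∫⁻ a, f a ∂μ) ^ (1 / 5 : ℝ) *
        μ univ ^ (1 / 5 : ℝ) := by
  have hholder := ENNReal.lintegral_prod_norm_pow_le (μ := μ) Finset.univ
    (f := ![fun a ↦ g a * (k a * w a), f, fun _ ↦ 1])
    (fun i _ ↦ by fin_cases i <;> exact Measurable.aemeasurable (by dsimp; fun_prop))
    (p := ![3 / 5, 1 / 5, 1 / 5])
    (by simp only [Fin.sum_univ_three, Matrix.cons_val]; norm_num)
    (fun i _ ↦ by fin_cases i <;> norm_num)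
  simp only [Fin.prod_univ_three, Matrix.cons_val, lintegral_one, ENNReal.one_rpow] at hholder
  refine (lintegral_mono fun a ↦ le_of_eq ?_).trans hholder
  simp only [ENNReal.mul_rpow_of_nonneg _ _ (show (0 : ℝ) ≤ 3 / 5 by norm_num)]
  ring

theorem ofReal_mul_ofReal_sqrt_sq_mul_eq_one {γ r y z : ℝ} (hγ : γ ≠ 0) (hr : 0 < r) (hy : y ≠ 0)
    (hz : z ≠ 0) :
    ENNReal.ofReal |γ⁻¹ * z| * ENNReal.ofReal √(r / |y * z|) ^ 2 * ENNReal.ofReal (|γ * y| / r) =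
      1 := by
  rw [← ENNReal.ofReal_pow (by positivity), Real.sq_sqrt (by positivity),
    ← ENNReal.ofReal_mul (by positivity), ← ENNReal.ofReal_mul (by positivity),
    ← ENNReal.ofReal_one]
  simp only [abs_mul, abs_inv]
  congr 1
  field_simp

section Trilinear

variable {E : Type*} [NormedAddCommGroup E] [InnerProductSpace ℝ E]

/-- The integrand of the trilinear form dual to the spherical average. The functions are normalised
so that the natural bound for its integral over the unit sphere is in terms of their `L¹` norms. -/
noncomputable def trilinearIntegrand (a b c : E) (f g h : ℝ → ℝ≥0∞) (x : E) : ℝ≥0∞ :=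
  f (inner ℝ a x) ^ (1 / 5 : ℝ) * g (inner ℝ b x) ^ (3 / 5 : ℝ) * h (inner ℝ c x) ^ (3 / 5 : ℝ)

theorem trilinearIntegrand_swap (a b c : E) (f g h : ℝ → ℝ≥0∞) :
    trilinearIntegrand a b c f g h = trilinearIntegrand a c b f h g := by
  funext x
  exact mul_right_comm _ _ _

variable [MeasurableSpace E] [BorelSpace E]

@[fun_prop]
theorem measurable_trilinearIntegrand (a b c : E) {f g h : ℝ → ℝ≥0∞} (hf : Measurable f)
    (hg : Measurable g) (hh : Measurable h) : Measurable (trilinearIntegrand a b c f g h) := by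
  unfold trilinearIntegrand
  fun_prop

variable [FiniteDimensional ℝ E]

theorem ae_toSphere_inner_ne_zero_and_sq_lt_one (e : OrthonormalBasis (Fin 3) ℝ E) :
    ∀ᵐ σ ∂(volume : Measure E).toSphere, inner ℝ (e 1) σ.1 ≠ 0 ∧ inner ℝ (e 2) σ.1 ≠ 0 ∧
      inner ℝ (e 0) σ.1 ^ 2 < 1 := by
  have hE : Module.finrank ℝ E = 3 := by simpa using Module.finrank_eq_card_basis e.toBasis
  filter_upwards [ae_toSphere_inner_ne_zero hE (e.orthonormal.ne_zero 1),
    ae_toSphere_inner_ne_zero hE (e.orthonormal.ne_zero 2)] with σ h1 h2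
  refine ⟨h1, h2, ?_⟩
  have hsum := e.sum_sq_norm_inner_right σ.1
  simp only [norm_eq_of_mem_sphere, Fin.sum_univ_three, norm_eq_abs, sq_abs, one_pow] at hsum
  have := sq_pos_of_ne_zero h1
  nlinarith [sq_nonneg (inner ℝ (e 2) σ.1)]

theorem exists_lintegral_rpow_one_fifth_mul_trilinearIntegrand_le (hE : Module.finrank ℝ E = 3)
    {a b c n : E} (hbc : LinearIndependent ℝ ![b, c]) (hca : LinearIndependent ℝ ![c, a])
    (hc : inner ℝ c n = 0) (ha : inner ℝ a n = 0) :
    ∃ C ≠ ∞, ∀ f g h : ℝ → ℝ≥0∞, Measurable f → Measurable g → Measurable h →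
      ∫⁻ σ, ENNReal.ofReal |inner ℝ n σ.1| ^ (1 / 5 : ℝ) * trilinearIntegrand a b c f g h σ.1
        ∂(volume : Measure E).toSphere ≤
      C * ((∫⁻ x, f x) ^ (1 / 5 : ℝ) * (∫⁻ x, g x) ^ (3 / 5 : ℝ) * (∫⁻ x, h x) ^ (3 / 5 : ℝ)) := by
  obtain ⟨C₃, hC₃, h₃⟩ := exists_lintegral_comp_inner_mul_comp_inner_le hE hca hc ha
  have hc0 : c ≠ 0 := hbc.ne_zero 1
  obtain ⟨e, α, β, γ, hα, hγ, hbe, hce⟩ :=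
    exists_orthonormalBasis_adapted_of_linearIndependent hE hbc
  obtain ⟨C₁, hC₁, h₁⟩ := exists_lintegral_comp_inner_mul_comp_inner_le hE hbc (n := γ⁻¹ • e 2)
    (by simp [hbe, inner_smul_left, inner_smul_right])
    (by simp [hce, inner_add_left, inner_smul_left, inner_smul_right])
  obtain ⟨C₂, hC₂, h₂⟩ := exists_lintegral_comp_inner_mul_sqrt_le e hα
  obtain ⟨C₄, hC₄, h₄⟩ :=
    exists_lintegral_comp_inner_mul_abs_div_le hE hc0 (e.orthonormal.norm_eq_one 0)
  rw [← hbe] at h₂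
  refine ⟨C₁ ^ (1 / 5 : ℝ) * C₂ ^ (2 / 5 : ℝ) * C₃ ^ (1 / 5 : ℝ) * C₄ ^ (1 / 5 : ℝ),
    by finiteness, fun f g h hf hg hh ↦ ?_⟩
  have hweights : ∀ᵐ σ ∂(volume : Measure E).toSphere, ENNReal.ofReal |inner ℝ (γ⁻¹ • e 2) σ.1| *
      ENNReal.ofReal √((1 - inner ℝ (e 0) σ.1 ^ 2) / |inner ℝ (e 1) σ.1 * inner ℝ (e 2) σ.1|) ^ 2 *
      ENNReal.ofReal (|inner ℝ c σ.1 - inner ℝ c (e 0) * inner ℝ (e 0) σ.1| /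
        (1 - inner ℝ (e 0) σ.1 ^ 2)) = 1 := by
    filter_upwards [ae_toSphere_inner_ne_zero_and_sq_lt_one e] with σ ⟨h1, h2, h0⟩
    rw [real_inner_smul_left, show inner ℝ c σ.1 - inner ℝ c (e 0) * inner ℝ (e 0) σ.1 =
      γ * inner ℝ (e 1) σ.1 by simp [hce, inner_add_left, inner_smul_left]]
    exact ofReal_mul_ofReal_sqrt_sq_mul_eq_one hγ (sub_pos.2 h0) h1 h2
  unfold trilinearIntegrand
  grw [lintegral_rpow_one_fifth_mul_le (by fun_prop) (by fun_prop) (by fun_prop) (by fun_prop)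
    (by fun_prop) (by fun_prop) (by fun_prop) hweights, h₁ g h hg hh, h₂ g hg, h₃ h f hh hf,
    h₄ h hh]
  rw [← one_mul (_ * _ * _ ^ (3 / 5 : ℝ)), ← ENNReal.one_rpow (1 / 5),
    rpow_one_fifth_mul_eq_of_mul_sq_mul_eq_one (z := 1) (X := 1) (Y := 1) (by norm_num)]
  simp only [mul_one, ENNReal.mul_rpow_of_nonneg _ _ (show (0 : ℝ) ≤ 1 / 5 by norm_num),
    ENNReal.mul_rpow_of_nonneg _ _ (show (0 : ℝ) ≤ 2 / 5 by norm_num)]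
  exact le_of_eq (by ring)

theorem exists_lintegral_rpow_three_fifths_mul_trilinearIntegrand_le
    (hE : Module.finrank ℝ E = 3) {a b c n : E} (ha : a ≠ 0)
    (hbc : LinearIndependent ℝ ![b, c]) (hb : inner ℝ b n = 0) (hc : inner ℝ c n = 0) :
    ∃ C ≠ ∞, ∀ f g h : ℝ → ℝ≥0∞, Measurable f → Measurable g → Measurable h →
      ∫⁻ σ, ENNReal.ofReal |inner ℝ n σ.1| ^ (3 / 5 : ℝ) * trilinearIntegrand a b c f g h σ.1
        ∂(volume : Measure E).toSphere ≤
      C * ((∫⁻ x, f x) ^ (1 / 5 : ℝ) * (∫⁻ x, g x) ^ (3 / 5 : ℝ) * (∫⁻ x, h x) ^ (3 / 5 : ℝ)) := by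
  obtain ⟨C₁, hC₁, h₁⟩ := exists_lintegral_comp_inner_mul_comp_inner_le hE hbc hb hc
  obtain ⟨C₂, hC₂, h₂⟩ := exists_lintegral_comp_inner_le hE ha
  refine ⟨C₁ ^ (3 / 5 : ℝ) * C₂ ^ (1 / 5 : ℝ) *
    (volume : Measure E).toSphere univ ^ (1 / 5 : ℝ), by finiteness, fun f g h hf hg hh ↦ ?_⟩
  unfold trilinearIntegrand
  grw [lintegral_rpow_three_fifths_mul_le (by fun_prop) (by fun_prop) (by fun_prop) (by fun_prop),
    h₁ g h hg hh, h₂ f hf]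
  simp only [ENNReal.mul_rpow_of_nonneg _ _ (show (0 : ℝ) ≤ 1 / 5 by norm_num),
    ENNReal.mul_rpow_of_nonneg _ _ (show (0 : ℝ) ≤ 3 / 5 by norm_num)]
  exact le_of_eq (by ring)

theorem exists_lintegral_trilinearIntegrand_le (hE : Module.finrank ℝ E = 3) {a b c : E}
    (habc : LinearIndependent ℝ ![a, b, c]) :
    ∃ C ≠ ∞, ∀ f g h : ℝ → ℝ≥0∞, Measurable f → Measurable g → Measurable h →
      ∫⁻ σ, trilinearIntegrand a b c f g h σ.1 ∂(volume : Measure E).toSphere ≤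
      C * ((∫⁻ x, f x) ^ (1 / 5 : ℝ) * (∫⁻ x, g x) ^ (3 / 5 : ℝ) * (∫⁻ x, h x) ^ (3 / 5 : ℝ)) := by
  obtain ⟨n, horth, hn⟩ := exists_orthogonal_and_one_le_abs_inner
    (basisOfLinearIndependentOfCardEqFinrank habc (by simp [hE]))
  simp only [coe_basisOfLinearIndependentOfCardEqFinrank] at horth
  have hpair {i j : Fin 3} (hij : i ≠ j) := linearIndependent_pair_of_ne habc hij
  obtain ⟨C₀, hC₀, h₀⟩ := exists_lintegral_rpow_three_fifths_mul_trilinearIntegrand_le hE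
    (habc.ne_zero 0) (hpair (i := 1) (j := 2) (by decide)) (horth 0 1 (by decide))
    (horth 0 2 (by decide))
  obtain ⟨C₁, hC₁, h₁⟩ := exists_lintegral_rpow_one_fifth_mul_trilinearIntegrand_le hE
    (hpair (i := 1) (j := 2) (by decide)) (hpair (i := 2) (j := 0) (by decide))
    (horth 1 2 (by decide)) (horth 1 0 (by decide))
  obtain ⟨C₂, hC₂, h₂⟩ := exists_lintegral_rpow_one_fifth_mul_trilinearIntegrand_le hE
    (hpair (i := 2) (j := 1) (by decide)) (hpair (i := 1) (j := 0) (by decide))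
    (horth 2 1 (by decide)) (horth 2 0 (by decide))
  refine ⟨C₀ + C₁ + C₂, by finiteness, fun f g h hf hg hh ↦ ?_⟩
  have h₂' := h₂ f h g hf hh hg
  simp only [Matrix.cons_val] at h₀ h₁ h₂'
  rw [← trilinearIntegrand_swap, mul_right_comm] at h₂'
  rw [add_mul, add_mul]
  grw [← h₀ f g h hf hg hh, ← h₁ f g h hf hg hh, ← h₂']
  rw [← lintegral_add_left (by fun_prop), ← lintegral_add_left (by fun_prop)]
  refine lintegral_mono fun σ ↦ ?_
  rw [← add_mul, ← add_mul]
  refine le_mul_of_one_le_left' ?_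
  have hone {x p : ℝ} (hx : 1 ≤ |x|) (hp : 0 < p) : 1 ≤ ENNReal.ofReal |x| ^ p :=
    ENNReal.one_le_rpow (by simpa using hx) hp
  obtain ⟨i, hi⟩ := hn σ.1 (norm_eq_of_mem_sphere σ)
  fin_cases i
  · exact le_add_right (le_add_right (hone hi (by norm_num)))
  · exact le_add_right (le_add_left (hone hi (by norm_num)))
  · exact le_add_left (hone hi (by norm_num))

end Trilinear

theorem lintegral_rpow_le_of_forall_lintegral_mul_le {α : Type*} [MeasurableSpace α] {μ : Measure α}
    [SigmaFinite μ] {p q : ℝ} (hpq : p.HolderConjugate q) {T : α → ℝ≥0∞} {M : ℝ≥0∞}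
    (h : ∀ g : α → ℝ≥0∞, Measurable g →
      ∫⁻ a, g a * T a ∂μ ≤ M * (∫⁻ a, g a ^ q ∂μ) ^ (1 / q)) :
    (∫⁻ a, T a ^ p ∂μ) ^ (1 / p) ≤ M := by
  have hadd : 1 / p + 1 / q = 1 := by simpa using hpq.inv_add_inv_eq_one
  have hp : 0 ≤ 1 / p := one_div_nonneg.2 hpq.nonneg
  have hq : 0 ≤ 1 / q := one_div_nonneg.2 hpq.symm.nonneg
  rw [← ENNReal.le_rpow_inv_iff (one_div_pos.2 hpq.pos), one_div, inv_inv]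
  by_contra! hlt
  rw [lintegral_eq_nnreal] at hlt
  simp only [lt_iSup_iff] at hlt
  obtain ⟨ψ, hψT, hψ⟩ := hlt
  rw [← SimpleFunc.lintegral_eq_lintegral] at hψ
  obtain ⟨φ, hφψ, hφ_top, hφ⟩ := SimpleFunc.exists_lt_lintegral_simpleFunc_of_lt_lintegral hψ
  set I := ∫⁻ a, φ a ∂μ
  have hI : I ≠ 0 := (zero_le.trans_lt hφ).ne'
  have hsplit (x : ℝ≥0∞) : x = x ^ (1 / q) * x ^ (1 / p) := by
    rw [← ENNReal.rpow_add_of_nonneg _ _ hq hp, add_comm, hadd, ENNReal.rpow_one]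
  have hpoint (a : α) : (φ a : ℝ≥0∞) ≤ (φ a : ℝ≥0∞) ^ (1 / q) * T a := by
    nth_rw 1 [hsplit (φ a)]
    gcongr
    rw [one_div, ENNReal.rpow_inv_le_iff hpq.pos]
    exact (ENNReal.coe_le_coe.2 (hφψ a)).trans (hψT a)
  have hle : I ≤ M * I ^ (1 / q) := by
    refine (lintegral_mono hpoint).trans ((h _ (by fun_prop)).trans_eq ?_)
    simp only [← ENNReal.rpow_mul, one_div_mul_cancel hpq.symm.ne_zero, ENNReal.rpow_one, I]
  nth_rw 1 [hsplit I, mul_comm M] at hle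
  rw [ENNReal.mul_le_mul_iff_right (by simp [hI, hφ_top.ne]) (by finiteness), one_div,
    ENNReal.rpow_inv_le_iff hpq.pos] at hle
  exact hφ.not_ge hle

instance sFinite_normSphere (n : ℕ) : SFinite (normSphere n) := by
  unfold normSphere
  infer_instance

theorem lintegral_normSphere {n : ℕ} {f : EuclideanSpace ℝ (Fin n) → ℝ≥0∞} (hf : Measurable f) :
    ∫⁻ σ, f σ ∂normSphere n =
      ((volume : Measure (EuclideanSpace ℝ (Fin n))).toSphere univ)⁻¹ *
        ∫⁻ σ, f σ.1 ∂(volume : Measure (EuclideanSpace ℝ (Fin n))).toSphere := by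
  rw [normSphere, lintegral_smul_measure, lintegral_map hf measurable_subtype_coe,
    Measure.map_apply measurable_subtype_coe .univ, preimage_univ, smul_eq_mul]

theorem lintegral_mul_lintegral_translates_eq {μ : Measure (EuclideanSpace ℝ (Fin 3))} [SFinite μ]
    {f₀ f₁ f₂ g : ℝ → ℝ≥0∞} (h₀ : Measurable f₀) (h₁ : Measurable f₁) (h₂ : Measurable f₂)
    (hg : Measurable g) :
    ∫⁻ x, g x * ∫⁻ σ, f₀ (x - σ 0) * f₁ (x - σ 1) * f₂ (x - σ 2) ∂μ =
      ∫⁻ u, f₂ u * ∫⁻ σ, g (u + σ 2) * f₀ (u + (σ 2 - σ 0)) * f₁ (u + (σ 2 - σ 1)) ∂μ := by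
  calc _ = ∫⁻ x, ∫⁻ σ, g x * (f₀ (x - σ 0) * f₁ (x - σ 1) * f₂ (x - σ 2)) ∂μ :=
        lintegral_congr fun x ↦ (lintegral_const_mul _ (by fun_prop)).symm
    _ = ∫⁻ σ, (∫⁻ x, g x * (f₀ (x - σ 0) * f₁ (x - σ 1) * f₂ (x - σ 2))) ∂μ :=
        lintegral_lintegral_swap (by fun_prop)
    _ = ∫⁻ σ, (∫⁻ u, f₂ u * (g (u + σ 2) * f₀ (u + (σ 2 - σ 0)) * f₁ (u + (σ 2 - σ 1)))) ∂μ := by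
        refine lintegral_congr fun σ ↦ ?_
        rw [← lintegral_add_right_eq_self _ (σ 2)]
        refine lintegral_congr fun u ↦ ?_
        rw [add_sub_cancel_right, add_sub_assoc, add_sub_assoc]
        ring
    _ = ∫⁻ u, ∫⁻ σ, f₂ u * (g (u + σ 2) * f₀ (u + (σ 2 - σ 0)) * f₁ (u + (σ 2 - σ 1))) ∂μ :=
        lintegral_lintegral_swap (by fun_prop)
    _ = _ := lintegral_congr fun u ↦ lintegral_const_mul _ (by fun_prop)

theorem exists_lintegral_normSphere_translates_le :
    ∃ C ≠ ∞, ∀ f₀ f₁ g : ℝ → ℝ≥0∞, Measurable f₀ → Measurable f₁ → Measurable g → ∀ u,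
      ∫⁻ σ, g (u + σ 2) * f₀ (u + (σ 2 - σ 0)) * f₁ (u + (σ 2 - σ 1)) ∂normSphere 3 ≤
        C * ((∫⁻ x, g x ^ (5 : ℝ)) ^ (1 / 5 : ℝ) * (∫⁻ x, f₀ x ^ (5 / 3 : ℝ)) ^ (3 / 5 : ℝ) *
          (∫⁻ x, f₁ x ^ (5 / 3 : ℝ)) ^ (3 / 5 : ℝ)) := by
  have hv : LinearIndependent ℝ
      (![!₂[0, 0, 1], !₂[-1, 0, 1], !₂[0, -1, 1]] : Fin 3 → EuclideanSpace ℝ (Fin 3)) := by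
    rw [Fintype.linearIndependent_iff]
    intro c hc
    have h0 : c 1 = 0 := by simpa [Fin.sum_univ_three] using congrArg (· 0) hc
    have h1 : c 2 = 0 := by simpa [Fin.sum_univ_three] using congrArg (· 1) hc
    have h2 : c 0 = 0 := by simpa [Fin.sum_univ_three, h0, h1] using congrArg (· 2) hc
    simp [Fin.forall_fin_succ, h0, h1, h2]
  have hinner (x y : ℝ) (σ : EuclideanSpace ℝ (Fin 3)) :
      inner ℝ !₂[x, y, 1] σ = σ 2 + (x * σ 0 + y * σ 1) := by
    simp only [PiLp.inner_apply, RCLike.inner_apply, conj_trivial, Fin.sum_univ_three,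
      Matrix.cons_val]
    ring
  obtain ⟨C, hC, h⟩ := exists_lintegral_trilinearIntegrand_le finrank_euclideanSpace_fin hv
  have hsphere : (volume : Measure (EuclideanSpace ℝ (Fin 3))).toSphere univ ≠ 0 := by
    simpa only [ne_eq, Measure.measure_univ_eq_zero] using Measure.toSphere_ne_zero _
  refine ⟨((volume : Measure (EuclideanSpace ℝ (Fin 3))).toSphere univ)⁻¹ * C, by finiteness,
    fun f₀ f₁ g h₀ h₁ hg u ↦ ?_⟩
  have key := h (fun s ↦ g (u + s) ^ (5 : ℝ)) (fun s ↦ f₀ (u + s) ^ (5 / 3 : ℝ))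
    (fun s ↦ f₁ (u + s) ^ (5 / 3 : ℝ)) (by fun_prop) (by fun_prop) (by fun_prop)
  rw [lintegral_add_left_eq_self (fun s ↦ g s ^ (5 : ℝ)),
    lintegral_add_left_eq_self (fun s ↦ f₀ s ^ (5 / 3 : ℝ)),
    lintegral_add_left_eq_self (fun s ↦ f₁ s ^ (5 / 3 : ℝ))] at key
  rw [lintegral_normSphere (by fun_prop), mul_assoc]
  refine mul_le_mul' le_rfl (le_trans (lintegral_mono fun σ ↦ le_of_eq ?_) key)
  simp only [trilinearIntegrand, hinner, ← ENNReal.rpow_mul]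
  norm_num [sub_eq_add_neg]

theorem strong_type_at_N_star3 :
    ∃ C : ℝ, 0 < C ∧ ∀ f : Fin 3 → ℝ → ℝ,
      (∀ j, Measurable (f j)) → (∀ j x, 0 ≤ f j x) →
      lpNorm (5 / 4) (sphAvg 3 f) ≤ ENNReal.ofReal C *
        lpNorm (5 / 3) (fun x => ENNReal.ofReal (f 0 x)) *
        lpNorm (5 / 3) (fun x => ENNReal.ofReal (f 1 x)) *
        lpNorm 1 (fun x => ENNReal.ofReal (f 2 x)) := by
  obtain ⟨C, hC, h⟩ := exists_lintegral_normSphere_translates_le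
  refine ⟨C.toReal + 1, by positivity, fun f hf _ ↦ ?_⟩
  have hC_le : C ≤ ENNReal.ofReal (C.toReal + 1) := by
    rw [ENNReal.le_ofReal_iff_toReal_le hC (by positivity)]
    linarith
  have hf' (j : Fin 3) : Measurable fun x ↦ ENNReal.ofReal (f j x) := (hf j).ennreal_ofReal
  have h54 : (5 / 4 : ℝ≥0∞) ≠ ∞ := by finiteness
  have h53 : (5 / 3 : ℝ≥0∞) ≠ ∞ := by finiteness
  simp only [_root_.lpNorm, h54, h53, ENNReal.one_ne_top, if_false, ENNReal.toReal_div,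
    ENNReal.toReal_ofNat, ENNReal.toReal_one, ENNReal.rpow_one, div_one]
  refine lintegral_rpow_le_of_forall_lintegral_mul_le (q := 5)
    (Real.holderConjugate_iff.2 (by norm_num)) fun g hg ↦ ?_
  simp only [sphAvg, Fin.prod_univ_three]
  rw [lintegral_mul_lintegral_translates_eq (hf' 0) (hf' 1) (hf' 2) hg]
  grw [h _ _ g (hf' 0) (hf' 1) hg, lintegral_mul_const _ (hf' 2), hC_le]
  rw [one_div_div]
  exact le_of_eq (by ring)
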